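/- Let $k$ be an algebraically closed field of characteristic different from $2$ and $3$, let $n\ge 0$, and let $P_3(k^n)$ be the space of homogeneous cubic polynomials in $k[x_1,\dots,x_n]$. The q-rank $\operatorname{qrank}(f)$ of $f\in P_3(k^n)$ is the least $r\ge 0$ such that $f=\sum_{i=1}^r \ell_i q_i$ with each $\ell_i$ homogeneous of degree $1$ and each $q_i$ homogeneous of degree $2$. The group $GL_n(k)$ acts on $P_3(k^n)$ by invertible linear substitution of the variables, and the Zariski closure of a subset of $P_3(k^n)$ is the set of common zeros of all polynomial functions of the coefficients that vanish on the subset. For an integer $m\ge 0$ put $\xi(m)=\left\lfloor \frac{\sqrt{8m+17}-3}{2}\right\rfloor$. Separable degeneration: let $f\in P_3(k^n)$ have q-rank $r$, and assume that $f$ is not the cube of a nonzero linear form (this holds in particular whenever $r\neq 1$). Then there exist $g$ in the Zariski closure of the $GL_n(k)$-orbit of $f$, a subset $S\subseteq\{1,\dots,n\}$, an integer $m\ge 0$, homogeneous degree-$1$ polynomials $\ell_1,\dots,\ell_m$ using only the variables $x_j$ with $j\in S$, and homogeneous degree-$2$ polynomials $q_1,\dots,q_m$ using only the variables $x_j$ with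 $j\notin S$, such that $g=\sum_{i=1}^m \ell_i q_i$ and $2\operatorname{qrank}(g)\ge \xi(r)$. -/

import Mathlib

/-- The q-rank of a multivariate polynomial `f`: the least `m` such that
`f = ∑ ℓᵢ · qᵢ` with each `ℓᵢ` homogeneous of degree 1 and each `qᵢ` homogeneous
of degree 2, as an element of `ℕ∞`. -/
noncomputable def polyQRank {k : Type*} [Field k] {n : ℕ}
    (f : MvPolynomial (Fin n) k) : ℕ∞ :=
  sInf {r : ℕ∞ | ∃ m : ℕ, r = m ∧
    ∃ ℓ q : Fin m → MvPolynomial (Fin n) k,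
      (∀ i, (ℓ i).IsHomogeneous 1) ∧ (∀ i, (q i).IsHomogeneous 2) ∧
        f = ∑ i, ℓ i * q i}

/-- The action of `GLₙ(k)` on `MvPolynomial (Fin n) k` by invertible linear
substitution of the variables. -/
noncomputable def glAct {k : Type*} [Field k] {n : ℕ} (g : GL (Fin n) k)
    (f : MvPolynomial (Fin n) k) : MvPolynomial (Fin n) k :=
  MvPolynomial.aeval
    (fun j => ∑ i, MvPolynomial.C ((g : Matrix (Fin n) (Fin n) k) i j) *
      MvPolynomial.X i) f

/-- The `GLₙ(k)`-orbit of a polynomial. -/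
def glOrbit {k : Type*} [Field k] {n : ℕ} (f : MvPolynomial (Fin n) k) :
    Set (MvPolynomial (Fin n) k) :=
  {h | ∃ g : GL (Fin n) k, h = glAct g f}

/-- `g` lies in the Zariski closure of `S ⊆ MvPolynomial (Fin n) k`: every polynomial
in the coefficients (coordinates w.r.t. the monomial basis) vanishing on `S`
vanishes at `g`. -/
def InZariskiClosure {k : Type*} [Field k] {n : ℕ}
    (S : Set (MvPolynomial (Fin n) k)) (g : MvPolynomial (Fin n) k) : Prop :=
  ∀ P : MvPolynomial (Fin n →₀ ℕ) k,
    (∀ f ∈ S, MvPolynomial.eval (fun m => MvPolynomial.coeff m f) P = 0) →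
    MvPolynomial.eval (fun m => MvPolynomial.coeff m g) P = 0

/-- `ξ(d) = ⌊(√(8d+17) − 3)/2⌋`. -/
noncomputable def xi (d : ℕ) : ℕ := ⌊(Real.sqrt (8 * d + 17) - 3) / 2⌋₊

/-!
Polarisation writes `f` as the diagonal of a symmetric trilinear form `F` on `kⁿ`, and the q-rank
of `f` is the least codimension of a totally isotropic subspace of `F`. For disjoint subspaces
`P, Q`, a one-parameter subgroup of weights `2, -1` (or `-2, 1`) on `P, Q` and large weight on a
complement degenerates `f` to the mixed part `3 F(p, q, q)` as soon as the parts of negative weight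
vanish, namely `F(q, q, q)` (or `F(p, p, p)` and `F(p, p, q)`). This limit is a separable cubic.

Suppose all these separable cubics have q-rank at most `u`, where `2u + 1 ≤ ξ(r)`. Applying the
bound to a maximal totally isotropic subspace `W` and a complement `V`, and then once more with the
roles exchanged, gives large subspaces on which most mixed parts vanish. Isotropic vectors are
supplied by Krull's height theorem: fewer equations than variables have a nontrivial common zero.
Extending isotropic subspaces by them one vector at a time, the dimension count forces first
`u = 0`, then `r = 1`, and finally `F(W, ·, ·) = 0`; then `f` is the cube of a linear form.
-/

open MvPolynomial

section CommonZeros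

variable {k σ : Type*} [Field k]

/-- The automorphism `p(X) ↦ p(X + a)` of the polynomial ring. -/
noncomputable def translateAlgEquiv (a : σ → k) : MvPolynomial σ k ≃ₐ[k] MvPolynomial σ k :=
  .ofAlgHom (aeval fun i => X i + C (a i)) (aeval fun i => X i - C (a i))
    (by ext; simp [← algebraMap_eq]) (by ext; simp [← algebraMap_eq])

theorem aeval_translateAlgEquiv (a x : σ → k) (p : MvPolynomial σ k) :
    aeval x (translateAlgEquiv a p) = aeval (x + a) p :=
  DFunLike.congr_fun (f := (aeval x).comp (translateAlgEquiv a).toAlgHom)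
    (by ext i; simp [translateAlgEquiv]) p

theorem height_vanishingIdeal_singleton_eq (x y : σ → k) :
    (vanishingIdeal k {x}).height = (vanishingIdeal k {y}).height := by
  have hcomap : (vanishingIdeal k {x}).comap (translateAlgEquiv (y - x) : _ ≃+* _) =
      vanishingIdeal k {y} := by
    ext p
    simp [aeval_translateAlgEquiv]
  rw [← hcomap, RingEquiv.height_comap]

variable [IsAlgClosed k] [Finite σ]

theorem height_vanishingIdeal_singleton (x : σ → k) :
    (vanishingIdeal k {x}).height = Nat.card σ := by
  have hheight : ∀ I : Ideal (MvPolynomial σ k), I.IsMaximal →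
      I.height = (vanishingIdeal k {x}).height := by
    intro I hI
    obtain ⟨y, rfl⟩ := isMaximal_iff_eq_vanishingIdeal_singleton.1 hI
    exact height_vanishingIdeal_singleton_eq y x
  have hmax : (vanishingIdeal k {x}).IsMaximal :=
    isMaximal_iff_eq_vanishingIdeal_singleton.2 ⟨x, rfl⟩
  have hsup : ⨆ (I : Ideal (MvPolynomial σ k)) (_ : I.IsMaximal), I.height =
      (vanishingIdeal k {x}).height :=
    le_antisymm (iSup₂_le fun I hI => (hheight I hI).le) (le_iSup₂_of_le _ hmax le_rfl)
  have hdim : (((vanishingIdeal k {x}).height : ℕ∞) : WithBot ℕ∞) = (Nat.card σ : ℕ∞) := by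
    rw [← hsup, Ideal.sup_isMaximal_height_eq_ringKrullDim, ringKrullDim_of_isNoetherianRing,
      ringKrullDim_eq_zero_of_field, zero_add]
    rfl
  exact_mod_cast hdim

-- By Krull's height theorem an isolated point of the common zero locus would have height at most
-- the number of equations.
theorem exists_ne_common_zero {ι : Type*} [Finite ι] (p : ι → MvPolynomial σ k) (x : σ → k)
    (hp : ∀ i, eval x (p i) = 0) (hcard : Nat.card ι < Nat.card σ) :
    ∃ y ≠ x, ∀ i, eval y (p i) = 0 := by
  by_contra! hunique
  have hzero : zeroLocus k (Ideal.span (Set.range p)) = {x} := by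
    rw [zeroLocus_span]
    ext y
    simp only [Set.mem_ofPred_eq, Set.mem_singleton_iff, Set.forall_mem_range, aeval_eq_eval]
    refine ⟨fun hy => ?_, fun hy => hy ▸ hp⟩
    by_contra hyx
    obtain ⟨i, hi⟩ := hunique y hyx
    exact hi (hy i)
  have hradical : vanishingIdeal k {x} = (Ideal.span (Set.range p)).radical := by
    rw [← hzero, vanishingIdeal_zeroLocus_eq_radical]
  have : (vanishingIdeal k {x}).IsMaximal :=
    isMaximal_iff_eq_vanishingIdeal_singleton.2 ⟨x, rfl⟩
  have hminimal : vanishingIdeal k {x} ∈ (Ideal.span (Set.range p)).minimalPrimes := by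
    rw [← Ideal.radical_minimalPrimes, ← hradical, Ideal.minimalPrimes_eq_subsingleton_self]
    rfl
  have hheight := Ideal.height_le_card_of_mem_minimalPrimes_span (Set.finite_range p) hminimal
  rw [height_vanishingIdeal_singleton, Nat.cast_le, ← Set.image_univ] at hheight
  have hncard := Set.ncard_image_le (f := p) Set.finite_univ
  rw [Set.ncard_univ] at hncard
  exact (hheight.trans hncard).not_gt hcard

end CommonZeros

section TrilinearForms

open Module Submodule

/-- Trilinear forms on `E`. A cubic form is studied through the symmetric trilinear form of which
it is the diagonal. -/
abbrev TrilinForm (k E : Type*) [Field k] [AddCommGroup E] [Module k E] : Type _ :=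
  E →ₗ[k] E →ₗ[k] E →ₗ[k] k

namespace TrilinForm

variable {k E : Type*} [Field k] [AddCommGroup E] [Module k E] {F : TrilinForm k E}

/-- Symmetric trilinear forms; the two transpositions generate all permutations of the
arguments. -/
structure IsSymm (F : TrilinForm k E) : Prop where
  swap_left : ∀ x y z, F x y z = F y x z
  swap_right : ∀ x y z, F x y z = F x z y

/-- The form `F` vanishes on `A × B × C`. -/
def VanishesOn (F : TrilinForm k E) (A B C : Submodule k E) : Prop :=
  ∀ a ∈ A, ∀ b ∈ B, ∀ c ∈ C, F a b c = 0

/-- Totally isotropic subspaces: those on which `F` vanishes identically. -/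
def IsTotallyIsotropic (F : TrilinForm k E) (W : Submodule k E) : Prop :=
  F.VanishesOn W W W

variable {A A' B B' C C' W W' : Submodule k E}

theorem VanishesOn.mono (h : F.VanishesOn A B C) (hA : A' ≤ A) (hB : B' ≤ B) (hC : C' ≤ C) :
    F.VanishesOn A' B' C' :=
  fun a ha b hb c hc => h a (hA ha) b (hB hb) c (hC hc)

theorem VanishesOn.swap_left (hF : F.IsSymm) (h : F.VanishesOn A B C) : F.VanishesOn B A C :=
  fun b hb a ha c hc => hF.swap_left b a c ▸ h a ha b hb c hc

theorem VanishesOn.swap_right (hF : F.IsSymm) (h : F.VanishesOn A B C) : F.VanishesOn A C B :=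
  fun a ha c hc b hb => hF.swap_right a c b ▸ h a ha b hb c hc

theorem VanishesOn.sup_left (h : F.VanishesOn A B C) (h' : F.VanishesOn A' B C) :
    F.VanishesOn (A ⊔ A') B C := by
  intro x hx b hb c hc
  obtain ⟨a, ha, a', ha', rfl⟩ := mem_sup.1 hx
  simp [h a ha b hb c hc, h' a' ha' b hb c hc]

theorem VanishesOn.sup_sup (hF : F.IsSymm) (hAA : F.VanishesOn A A C) (hAB : F.VanishesOn A B C)
    (hBB : F.VanishesOn B B C) : F.VanishesOn (A ⊔ B) (A ⊔ B) C :=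
  ((hAA.sup_left (hAB.swap_left hF)).swap_left hF).sup_left ((hAB.sup_left hBB).swap_left hF)

theorem vanishesOn_span {s t u : Set E} (h : ∀ a ∈ s, ∀ b ∈ t, ∀ c ∈ u, F a b c = 0) :
    F.VanishesOn (span k s) (span k t) (span k u) := by
  intro a ha b hb c hc
  induction ha using span_induction with
  | zero => simp
  | add _ _ _ _ h₁ h₂ => simp [h₁, h₂]
  | smul _ _ _ h₁ => simp [h₁]
  | mem a ha =>
    induction hb using span_induction with
    | zero => simp
    | add _ _ _ _ h₁ h₂ => simp [h₁, h₂]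
    | smul _ _ _ h₁ => simp [h₁]
    | mem b hb => exact (span_le (p := LinearMap.ker (F a b))).2 (h a ha b hb) hc

theorem IsTotallyIsotropic.mono (hW : F.IsTotallyIsotropic W) (h : W' ≤ W) :
    F.IsTotallyIsotropic W' :=
  VanishesOn.mono hW h h h

theorem isTotallyIsotropic_bot : F.IsTotallyIsotropic ⊥ := by
  intro a ha b _ c _
  simp [(mem_bot k).1 ha]

theorem isTotallyIsotropic_span_singleton {v : E} (hv : F v v v = 0) :
    F.IsTotallyIsotropic (k ∙ v) :=
  vanishesOn_span (by simpa using hv)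

theorem IsTotallyIsotropic.sup (hF : F.IsSymm) (hA : F.IsTotallyIsotropic A)
    (hB : F.IsTotallyIsotropic B) (hAAB : F.VanishesOn A A B) (hABB : F.VanishesOn A B B) :
    F.IsTotallyIsotropic (A ⊔ B) := by
  have hA' : F.VanishesOn (A ⊔ B) (A ⊔ B) A :=
    .sup_sup hF hA (hAAB.swap_right hF) ((hABB.swap_left hF).swap_right hF)
  have hB' : F.VanishesOn (A ⊔ B) (A ⊔ B) B := .sup_sup hF hAAB hABB hB
  exact ((((hA'.swap_right hF).swap_left hF).sup_left
    ((hB'.swap_right hF).swap_left hF)).swap_left hF).swap_right hF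

theorem IsTotallyIsotropic.of_diagonal (hF : F.IsSymm) (h2 : (2 : k) ≠ 0) (h3 : (3 : k) ≠ 0)
    (h : ∀ x ∈ W, F x x x = 0) : F.IsTotallyIsotropic W := by
  have hxxy : ∀ x ∈ W, ∀ y ∈ W, F x x y = 0 := by
    intro x hx y hy
    have hadd := h _ (W.add_mem hx hy)
    have hsub := h _ (W.sub_mem hx hy)
    simp only [map_add, map_sub, LinearMap.add_apply, LinearMap.sub_apply, h x hx, h y hy,
      hF.swap_left y x, hF.swap_right x y x, hF.swap_right y y x] at hadd hsub
    have h6 : 2 * 3 * F x x y = 0 := by linear_combination hadd - hsub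
    simpa [h2, h3] using h6
  intro x hx y hy z hz
  have hadd := hxxy _ (W.add_mem hx hy) z hz
  simp only [map_add, LinearMap.add_apply, hxxy x hx z hz, hxxy y hy z hz,
    hF.swap_left y x] at hadd
  have h2' : 2 * F x y z = 0 := by linear_combination hadd
  simpa [h2] using h2'

/-- The least codimension of a totally isotropic subspace; for the trilinear form of a cubic form
this is the q-rank, see `polyQRank_eq_isotropicCodim`. -/
noncomputable def isotropicCodim (F : TrilinForm k E) : ℕ :=
  sInf {c | ∃ W, F.IsTotallyIsotropic W ∧ finrank k W + c = finrank k E}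

theorem exists_finrank_add_isotropicCodim (F : TrilinForm k E) :
    ∃ W, F.IsTotallyIsotropic W ∧ finrank k W + F.isotropicCodim = finrank k E :=
  Nat.sInf_mem (s := {c | ∃ W, F.IsTotallyIsotropic W ∧ finrank k W + c = finrank k E})
    ⟨finrank k E, ⊥, isTotallyIsotropic_bot, by simp⟩

theorem IsTotallyIsotropic.finrank_add_isotropicCodim_le [FiniteDimensional k E]
    (hW : F.IsTotallyIsotropic W) : finrank k W + F.isotropicCodim ≤ finrank k E := by
  obtain ⟨c, hc⟩ := Nat.exists_eq_add_of_le (finrank_le W)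
  have : F.isotropicCodim ≤ c := Nat.sInf_le ⟨W, hW, hc.symm⟩
  lia

end TrilinForm

end TrilinearForms

section PolynomialsAndForms

open Module

variable {k σ : Type*} [Field k]

theorem exists_eq_sum_X_mul [Fintype σ] {p : MvPolynomial σ k} {d : ℕ}
    (hp : p.IsHomogeneous (d + 1)) (hd : ((d + 1 : ℕ) : k) ≠ 0) :
    ∃ q : σ → MvPolynomial σ k, (∀ i, (q i).IsHomogeneous d) ∧ p = ∑ i, X i * q i := by
  refine ⟨fun i => C ((d + 1 : ℕ) : k)⁻¹ * pderiv i p, fun i => ?_, ?_⟩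
  · simpa using (isHomogeneous_C σ ((d + 1 : ℕ) : k)⁻¹).mul hp.pderiv
  · have heuler : C ((d + 1 : ℕ) : k) * p = ∑ i, X i * pderiv i p := by
      rw [hp.sum_X_mul_pderiv, nsmul_eq_mul, map_natCast]
    simp_rw [mul_left_comm (X _), ← Finset.mul_sum]
    rw [← heuler, ← mul_assoc, ← map_mul, inv_mul_cancel₀ hd, map_one, one_mul]

variable [Finite σ]

theorem exists_isHomogeneous_one_eval_eq (L : Dual k (σ → k)) :
    ∃ p : MvPolynomial σ k, p.IsHomogeneous 1 ∧ ∀ x, eval x p = L x := by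
  classical
  cases nonempty_fintype σ
  refine ⟨∑ i, X i * C (L (Pi.single i 1)), ?_, fun x => ?_⟩
  · exact .sum _ _ _ fun i _ => (isHomogeneous_X k i).mul (isHomogeneous_C _ _)
  · conv_rhs => rw [pi_eq_sum_univ' x]
    simp

theorem exists_isHomogeneous_two_eval_eq (G : (σ → k) →ₗ[k] Dual k (σ → k)) :
    ∃ p : MvPolynomial σ k, p.IsHomogeneous 2 ∧ ∀ x, eval x p = G x x := by
  classical
  cases nonempty_fintype σ
  choose p hp hpG using fun i => exists_isHomogeneous_one_eval_eq (G (Pi.single i 1))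
  refine ⟨∑ i, X i * p i, .sum _ _ _ fun i _ => (isHomogeneous_X k i).mul (hp i), fun x => ?_⟩
  have hx : G x x = G (∑ i, x i • Pi.single i 1) x := by rw [← pi_eq_sum_univ' x]
  simp [hx, hpG, LinearMap.sum_apply]

theorem exists_isHomogeneous_three_eval_eq (F : TrilinForm k (σ → k)) :
    ∃ p : MvPolynomial σ k, p.IsHomogeneous 3 ∧ ∀ x, eval x p = F x x x := by
  classical
  cases nonempty_fintype σ
  choose p hp hpF using fun i => exists_isHomogeneous_two_eval_eq (F (Pi.single i 1))
  refine ⟨∑ i, X i * p i, .sum _ _ _ fun i _ => (isHomogeneous_X k i).mul (hp i), fun x => ?_⟩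
  have hx : F x x x = F (∑ i, x i • Pi.single i 1) x x := by rw [← pi_eq_sum_univ' x]
  simp [hx, hpF, LinearMap.sum_apply]

theorem exists_dual_eval_eq {p : MvPolynomial σ k} (hp : p.IsHomogeneous 1) :
    ∃ L : Dual k (σ → k), ∀ x, eval x p = L x := by
  cases nonempty_fintype σ
  obtain ⟨q, hq, rfl⟩ := exists_eq_sum_X_mul hp (by simp)
  have hconst : ∀ i, q i = C (coeff 0 (q i)) := fun i =>
    totalDegree_eq_zero_iff_eq_C.1 (Nat.le_zero.1 (hq i).totalDegree_le)
  refine ⟨∑ i, coeff 0 (q i) • LinearMap.proj i, fun x => ?_⟩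
  rw [map_sum, LinearMap.sum_apply]
  refine Finset.sum_congr rfl fun i _ => ?_
  rw [hconst i]
  simp [mul_comm]

theorem exists_bilin_eval_eq (h2 : (2 : k) ≠ 0) {p : MvPolynomial σ k} (hp : p.IsHomogeneous 2) :
    ∃ G : (σ → k) →ₗ[k] Dual k (σ → k), ∀ x, eval x p = G x x := by
  cases nonempty_fintype σ
  obtain ⟨q, hq, rfl⟩ := exists_eq_sum_X_mul hp (by exact_mod_cast h2)
  choose L hL using fun i => exists_dual_eval_eq (hq i)
  exact ⟨∑ i, (LinearMap.proj i).smulRight (L i), fun x => by simp [hL, LinearMap.sum_apply]⟩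

theorem exists_trilinForm_eval_eq (h2 : (2 : k) ≠ 0) (h3 : (3 : k) ≠ 0) {p : MvPolynomial σ k}
    (hp : p.IsHomogeneous 3) : ∃ F : TrilinForm k (σ → k), ∀ x, eval x p = F x x x := by
  cases nonempty_fintype σ
  obtain ⟨q, hq, rfl⟩ := exists_eq_sum_X_mul hp (by exact_mod_cast h3)
  choose G hG using fun i => exists_bilin_eval_eq h2 (hq i)
  exact ⟨∑ i, (LinearMap.proj i).smulRight (G i), fun x => by simp [hG, LinearMap.sum_apply]⟩

theorem TrilinForm.exists_isSymm_diagonal_eq {E : Type*} [AddCommGroup E] [Module k E]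
    (h2 : (2 : k) ≠ 0) (h3 : (3 : k) ≠ 0) (F : TrilinForm k E) :
    ∃ G : TrilinForm k E, G.IsSymm ∧ ∀ x, G x x x = F x x x := by
  let swapRight : TrilinForm k E → TrilinForm k E := fun T =>
    (LinearMap.lflip (R₀ := k)).toLinearMap ∘ₗ T
  have hswapRight : ∀ T x y z, swapRight T x y z = T x z y := fun _ _ _ _ => rfl
  refine ⟨(2 * 3 : k)⁻¹ • (F + F.flip + swapRight F + (swapRight F).flip + swapRight F.flip +
    (swapRight F.flip).flip), ⟨fun x y z => ?_, fun x y z => ?_⟩, fun x => ?_⟩ <;>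
    simp only [LinearMap.smul_apply, LinearMap.add_apply, LinearMap.flip_apply, hswapRight,
      smul_eq_mul]
  · ring
  · ring
  · field_simp
    ring

theorem exists_isSymm_eval_eq (h2 : (2 : k) ≠ 0) (h3 : (3 : k) ≠ 0) {p : MvPolynomial σ k}
    (hp : p.IsHomogeneous 3) :
    ∃ F : TrilinForm k (σ → k), F.IsSymm ∧ ∀ x, eval x p = F x x x := by
  obtain ⟨F, hF⟩ := exists_trilinForm_eval_eq h2 h3 hp
  obtain ⟨G, hG, hGF⟩ := F.exists_isSymm_diagonal_eq h2 h3
  exact ⟨G, hG, fun x => by rw [hF, hGF]⟩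

end PolynomialsAndForms

section IsotropicSubspaces

open Module Submodule

variable {k E : Type*} [Field k] [AddCommGroup E] [Module k E]

theorem span_range_basis_coe {ι : Type*} {P : Submodule k E} (b : Basis ι k P) :
    span k (Set.range fun i => (b i : E)) = P := by
  rw [Set.range_comp' Subtype.val b, ← coe_subtype, span_image, b.span_eq, Submodule.map_top,
    range_subtype]

variable [FiniteDimensional k E]

theorem finrank_sup_of_disjoint {P Q : Submodule k E} (h : Disjoint P Q) :
    finrank k ↥(P ⊔ Q) = finrank k P + finrank k Q := by
  rw [← finrank_sup_add_finrank_inf_eq P Q, h.eq_bot, finrank_bot, add_zero]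

theorem exists_le_forall_dual_eq_zero {κ : Type*} [Finite κ] (L : κ → Dual k E)
    (U : Submodule k E) :
    ∃ U' ≤ U, (∀ v ∈ U', ∀ i, L i v = 0) ∧ finrank k U ≤ finrank k U' + Nat.card κ := by
  cases nonempty_fintype κ
  have hker : finrank k E ≤ finrank k (LinearMap.ker (LinearMap.pi L)) + Nat.card κ := by
    have hrange := finrank_le (LinearMap.range (LinearMap.pi L))
    rw [finrank_fintype_fun_eq_card, ← Nat.card_eq_fintype_card] at hrange
    have hsum := LinearMap.finrank_range_add_finrank_ker (LinearMap.pi L)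
    lia
  refine ⟨U ⊓ LinearMap.ker (LinearMap.pi L), inf_le_left,
    fun v hv i => congrFun (LinearMap.mem_ker.1 hv.2) i, ?_⟩
  have hinf := finrank_sup_add_finrank_inf_eq U (LinearMap.ker (LinearMap.pi L))
  have hsup := finrank_le (U ⊔ LinearMap.ker (LinearMap.pi L))
  lia

namespace TrilinForm

variable {F : TrilinForm k E}

theorem exists_le_vanishesOn (F : TrilinForm k E) (A B U : Submodule k E) :
    ∃ U' ≤ U, F.VanishesOn A B U' ∧
      finrank k U ≤ finrank k U' + finrank k A * finrank k B := by
  let a := finBasis k A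
  let b := finBasis k B
  obtain ⟨U', hU', hzero, hdim⟩ := exists_le_forall_dual_eq_zero
    (fun p : Fin (finrank k A) × Fin (finrank k B) => F (a p.1) (b p.2)) U
  refine ⟨U', hU', ?_, by simpa using hdim⟩
  have hspan := vanishesOn_span (F := F) (s := Set.range fun i => (a i : E))
    (t := Set.range fun j => (b j : E)) (u := U')
    (by rintro _ ⟨i, rfl⟩ _ ⟨j, rfl⟩ v hv; exact hzero v hv (i, j))
  simpa [span_range_basis_coe a, span_range_basis_coe b] using hspan

-- By symmetry only the pairs `i ≤ j` of basis vectors of `D` impose a condition.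
theorem IsSymm.exists_le_vanishesOn_self (hF : F.IsSymm) (D U : Submodule k E) :
    ∃ U' ≤ U, F.VanishesOn D D U' ∧
      2 * finrank k U ≤ 2 * finrank k U' + finrank k D * (finrank k D + 1) := by
  let d := finBasis k D
  obtain ⟨U', hU', hzero, hdim⟩ := exists_le_forall_dual_eq_zero
    (Sym2.lift ⟨fun i j => F (d i) (d j), fun i j => LinearMap.ext (hF.swap_left _ _)⟩) U
  refine ⟨U', hU', ?_, ?_⟩
  · have hspan := vanishesOn_span (F := F) (s := Set.range fun i => (d i : E))
      (t := Set.range fun j => (d j : E)) (u := U')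
      (by rintro _ ⟨i, rfl⟩ _ ⟨j, rfl⟩ v hv; exact hzero v hv s(i, j))
    simpa [span_range_basis_coe d] using hspan
  · have hcard : 2 * Nat.card (Sym2 (Fin (finrank k D))) = finrank k D * (finrank k D + 1) := by
      rw [Nat.card_eq_fintype_card, Sym2.card, Fintype.card_fin, Nat.choose_two_right,
        Nat.add_sub_cancel, mul_comm (_ + 1)]
      exact Nat.mul_div_cancel' (Nat.even_mul_succ_self _).two_dvd
    lia

variable [IsAlgClosed k]

theorem exists_ne_zero_mem_bilin_trilin_eq_zero (F : TrilinForm k E) {ι : Type*} [Finite ι]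
    (G : ι → E →ₗ[k] Dual k E) (U : Submodule k E) (hcard : Nat.card ι + 1 < finrank k U) :
    ∃ v ∈ U, v ≠ 0 ∧ (∀ i, G i v v = 0) ∧ F v v v = 0 := by
  let e := (finBasis k U).equivFun
  let φ : (Fin (finrank k U) → k) →ₗ[k] E := U.subtype ∘ₗ e.symm.toLinearMap
  choose q _ hqG using fun i => exists_isHomogeneous_two_eval_eq ((G i).compl₁₂ φ φ)
  obtain ⟨c, -, hcF⟩ := exists_isHomogeneous_three_eval_eq
    ((F.compl₁₂ φ φ).compr₂ (LinearMap.lcomp k k φ))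
  obtain ⟨x, hx0, hx⟩ := exists_ne_common_zero (fun o : Option ι => o.elim c q) 0
    (by rintro (_ | i) <;> simp [hqG, hcF, -eval_zero]) (by simpa [Finite.card_option] using hcard)
  refine ⟨φ x, (e.symm x).2, ?_, fun i => ?_, ?_⟩
  · simpa [φ] using hx0
  · simpa [hqG] using hx (some i)
  · simpa [hcF] using hx none

theorem IsTotallyIsotropic.exists_extension (hF : F.IsSymm) {D U : Submodule k E}
    (hD : F.IsTotallyIsotropic D) (hDDU : F.VanishesOn D D U)
    (hdim : finrank k D + 1 < finrank k U) :
    ∃ v ∈ U, v ≠ 0 ∧ F.IsTotallyIsotropic (D ⊔ k ∙ v) := by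
  let d := finBasis k D
  obtain ⟨v, hvU, hv0, hquad, hcub⟩ :=
    F.exists_ne_zero_mem_bilin_trilin_eq_zero (fun i => F (d i)) U (by simpa using hdim)
  have hDvv : F.VanishesOn D (k ∙ v) (k ∙ v) := by
    have hspan := vanishesOn_span (F := F) (s := Set.range fun i => (d i : E)) (t := {v})
      (u := {v}) (by simpa using hquad)
    rwa [span_range_basis_coe d] at hspan
  exact ⟨v, hvU, hv0, hD.sup hF (isTotallyIsotropic_span_singleton hcub)
    (hDDU.mono le_rfl le_rfl ((span_singleton_le_iff_mem _ _).2 hvU)) hDvv⟩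

theorem IsSymm.exists_isTotallyIsotropic_le (hF : F.IsSymm) (t : ℕ) (U : Submodule k E)
    (hU : t * (t + 3) ≤ 2 * finrank k U) :
    ∃ C ≤ U, finrank k C = t ∧ F.IsTotallyIsotropic C := by
  induction t with
  | zero => exact ⟨⊥, bot_le, finrank_bot k E, isTotallyIsotropic_bot⟩
  | succ t ih =>
    obtain ⟨C, hCU, rfl, hC⟩ := ih (by nlinarith)
    obtain ⟨U₀, hdisj, rfl⟩ := IsModularLattice.exists_disjoint_and_sup_eq hCU
    obtain ⟨U', hU', hCCU, hdim⟩ := hF.exists_le_vanishesOn_self C U₀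
    rw [finrank_sup_of_disjoint hdisj] at hU
    obtain ⟨v, hv, hv0, hiso⟩ := hC.exists_extension hF hCCU (by nlinarith)
    have hvU₀ : (k ∙ v) ≤ U₀ := (span_singleton_le_iff_mem _ _).2 (hU' hv)
    refine ⟨C ⊔ k ∙ v, sup_le_sup_left hvU₀ C, ?_, hiso⟩
    rw [finrank_sup_of_disjoint (hdisj.mono_right hvU₀), finrank_span_singleton hv0]

end TrilinForm

end IsotropicSubspaces

section MixedParts

open Module Submodule

theorem disjoint_sup_sup_of_disjoint_sup_sup {α : Type*} [Lattice α] [OrderBot α]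
    [IsModularLattice α] {a b c d : α} (hab : Disjoint a b) (hcd : Disjoint c d)
    (h : Disjoint (a ⊔ b) (c ⊔ d)) : Disjoint (a ⊔ c) (b ⊔ d) := by
  have hb : Disjoint b (a ⊔ c) :=
    hab.symm.disjoint_sup_right_of_disjoint_sup_left
      (sup_comm a b ▸ h.mono_right le_sup_left)
  refine hb.symm.disjoint_sup_right_of_disjoint_sup_left ?_
  rw [sup_right_comm]
  exact (hcd.symm.disjoint_sup_right_of_disjoint_sup_left
    (sup_comm c d ▸ h.symm)).symm.mono_left (sup_comm (a ⊔ b) c ▸ le_rfl)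

namespace TrilinForm

variable {k E : Type*} [Field k] [AddCommGroup E] [Module k E] {F : TrilinForm k E} {u : ℕ}

/-- Every mixed part `P × Q × Q` of `F` that some one-parameter subgroup of `GL(E)` isolates as a
limit of `F` vanishes on a product `A × B × B` of subspaces of total codimension at most `u`. The
two alternatives are the weights `2, -1` and `-2, 1` on `P, Q`: all parts of negative weight on
`P ⊔ Q` have to vanish. -/
def MixedPartsBounded (F : TrilinForm k E) (u : ℕ) : Prop :=
  ∀ P Q : Submodule k E, Disjoint P Q →
    F.IsTotallyIsotropic Q ∨ F.IsTotallyIsotropic P ∧ F.VanishesOn P P Q →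
    ∃ A ≤ P, ∃ B ≤ Q, F.VanishesOn A B B ∧
      finrank k P + finrank k Q ≤ finrank k A + finrank k B + u

variable [FiniteDimensional k E] {V W : Submodule k E}

theorem MixedPartsBounded.exists_split (hF : F.IsSymm) (hK : F.MixedPartsBounded u)
    (hVW : IsCompl V W) (hW : F.IsTotallyIsotropic W) :
    ∃ A ≤ V, ∃ B ≤ W, ∃ A' ≤ A, ∃ B' ≤ B, F.VanishesOn A B B ∧ F.VanishesOn B' A' A' ∧
      finrank k E ≤ finrank k A + finrank k B + u ∧
      finrank k E ≤ finrank k A' + finrank k B' + 2 * u := by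
  obtain ⟨A, hA, B, hB, hABB, hdim⟩ := hK V W hVW.disjoint (.inl hW)
  obtain ⟨B', hB', A', hA', hBAA, hdim'⟩ := hK B A (hVW.disjoint.mono hA hB).symm
    (.inr ⟨hW.mono hB, (hABB.swap_left hF).swap_right hF⟩)
  have hsum := finrank_add_eq_of_isCompl hVW
  exact ⟨A, hA, B, hB, A', hA', B', hB', hABB, hBAA, by lia, by lia⟩

theorem MixedPartsBounded.finrank_add_finrank_le (hF : F.IsSymm) (hK : F.MixedPartsBounded u)
    {C : Submodule k E} (hCW : Disjoint C W) (hC : F.IsTotallyIsotropic C)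
    (hW : F.IsTotallyIsotropic W) :
    finrank k W + finrank k C + F.isotropicCodim ≤ finrank k E + 2 * u := by
  obtain ⟨V, hCV, hVW⟩ := hCW.exists_isCompl
  obtain ⟨A, hA, B, hB, A', hA', B', hB', hABB, hBAA, -, hdim⟩ := hK.exists_split hF hVW hW
  have hA'V : A' ≤ V := hA'.trans hA
  have hB'W : B' ≤ W := hB'.trans hB
  have hiso : F.IsTotallyIsotropic (C ⊓ A' ⊔ B') :=
    .sup hF (hC.mono inf_le_left) (hW.mono hB'W)
      (((hBAA.swap_left hF).swap_right hF).mono inf_le_right inf_le_right le_rfl)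
      (hABB.mono (inf_le_right.trans hA') hB' hB')
  have hcodim := hiso.finrank_add_isotropicCodim_le
  rw [finrank_sup_of_disjoint (hVW.disjoint.mono (inf_le_right.trans hA'V) hB'W)] at hcodim
  have hCA' := finrank_sup_add_finrank_inf_eq C A'
  have hsup : finrank k ↥(C ⊔ A') ≤ finrank k V := finrank_mono (sup_le hCV hA'V)
  have hsum := finrank_add_eq_of_isCompl hVW
  lia

variable [IsAlgClosed k]

theorem IsTotallyIsotropic.exists_extension_of_vanishesOn (hF : F.IsSymm) {D X U : Submodule k E}
    (hDX : F.IsTotallyIsotropic (D ⊔ X)) (hXXU : F.VanishesOn X X U)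
    (hdim : finrank k D * (finrank k D + 1) + 2 * (finrank k D * finrank k X) +
      2 * (finrank k D + finrank k X + 1) < 2 * finrank k U) :
    ∃ v ∈ U, v ≠ 0 ∧ F.IsTotallyIsotropic (D ⊔ X ⊔ k ∙ v) := by
  obtain ⟨U₁, hU₁, hDDU, hdim₁⟩ := hF.exists_le_vanishesOn_self D U
  obtain ⟨U₂, hU₂, hDXU, hdim₂⟩ := F.exists_le_vanishesOn D X U₁
  have hvanish : F.VanishesOn (D ⊔ X) (D ⊔ X) U₂ :=
    .sup_sup hF (hDDU.mono le_rfl le_rfl hU₂) hDXU (hXXU.mono le_rfl le_rfl (hU₂.trans hU₁))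
  have hsup := finrank_add_le_finrank_add_finrank D X
  obtain ⟨v, hv, hv0, hiso⟩ := hDX.exists_extension hF hvanish (by lia)
  exact ⟨v, hU₁ (hU₂ hv), hv0, hiso⟩

theorem MixedPartsBounded.exists_tight_split (hF : F.IsSymm) (hK : F.MixedPartsBounded u)
    (hVW : IsCompl V W) (hW : F.IsTotallyIsotropic W)
    (hWmax : finrank k W + F.isotropicCodim = finrank k E)
    (hu : (2 * u + 1) * (2 * u + 4) ≤ 2 * F.isotropicCodim + 2) :
    ∃ C ≤ V, ∃ B ≤ W, ∃ B' ≤ B, finrank k C = 2 * u ∧ finrank k B' + 2 * u = finrank k W ∧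
      finrank k W ≤ finrank k B + u ∧ F.VanishesOn V B B ∧ F.VanishesOn B' V V ∧
      F.IsTotallyIsotropic (C ⊔ B') := by
  obtain ⟨A, hA, B, hB, A', hA', B', hB', hABB, hBAA, hdim, hdim'⟩ := hK.exists_split hF hVW hW
  have hA'V : A' ≤ V := hA'.trans hA
  have hB'W : B' ≤ W := hB'.trans hB
  have hsum := finrank_add_eq_of_isCompl hVW
  have hA'dim := finrank_mono hA'V
  have hB'dim := finrank_mono hB'W
  obtain ⟨C, hCA, hCdim, hC⟩ := hF.exists_isTotallyIsotropic_le (2 * u) A' (by nlinarith)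
  have hiso : F.IsTotallyIsotropic (C ⊔ B') :=
    hC.sup hF (hW.mono hB'W) (((hBAA.swap_left hF).swap_right hF).mono hCA hCA le_rfl)
      (hABB.mono (hCA.trans hA') hB' hB')
  have hcodim := hiso.finrank_add_isotropicCodim_le
  rw [finrank_sup_of_disjoint (hVW.disjoint.mono (hCA.trans hA'V) hB'W)] at hcodim
  obtain rfl : A' = V := eq_of_le_of_finrank_eq hA'V (by lia)
  obtain rfl : A = A' := le_antisymm hA hA'
  exact ⟨C, hCA, B, hB, B', hB', hCdim, by lia, by lia, hABB, hBAA, hiso⟩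

-- The new subspace contains some `x ∈ B`, for which `F x x` vanishes on `V`: this saves the one
-- linear condition by which the dimension count would otherwise fail.
theorem exists_isTotallyIsotropic_disjoint_sup (hF : F.IsSymm) (hVW : Disjoint V W)
    (hW : F.IsTotallyIsotropic W) {B B' C : Submodule k E} (hB : B ≤ W) (hB' : B' < B)
    (hC : C ≤ V) (hVBB : F.VanishesOn V B B) {t : ℕ} (ht : finrank k B' + t = finrank k W)
    (hdim : 2 * finrank k C + t * (t + 3) < 2 * finrank k V) :
    ∃ P, F.IsTotallyIsotropic P ∧ Disjoint P (C ⊔ B') ∧ finrank k P = t + 1 := by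
  obtain ⟨x, hxB, hxB'⟩ := SetLike.exists_of_lt hB'
  have hx0 : x ≠ 0 := fun h => hxB' (h ▸ B'.zero_mem)
  have hxB'disj : Disjoint B' (k ∙ x) := (disjoint_span_singleton' hx0).2 hxB'
  have hxleB : (k ∙ x) ≤ B := (span_singleton_le_iff_mem _ _).2 hxB
  obtain ⟨D, hDdisj, hDsup⟩ := IsModularLattice.exists_disjoint_and_sup_eq
    (sup_le (hB'.le.trans hB) (hxleB.trans hB))
  obtain ⟨V₀, hCV₀, rfl⟩ := IsModularLattice.exists_disjoint_and_sup_eq hC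
  have hDW : D ≤ W := hDsup ▸ le_sup_right
  have hDxdim : finrank k ↥(D ⊔ k ∙ x) = finrank k D + 1 := by
    rw [finrank_sup_of_disjoint (hDdisj.symm.mono_right le_sup_right), finrank_span_singleton hx0]
  have hDdim : finrank k D + 1 = t := by
    have h := finrank_sup_of_disjoint hDdisj
    rw [hDsup, finrank_sup_of_disjoint hxB'disj, finrank_span_singleton hx0] at h
    lia
  have hDxW : D ⊔ k ∙ x ≤ W := sup_le hDW (hxleB.trans hB)
  obtain ⟨v, hv, hv0, hiso⟩ := (hW.mono hDxW).exists_extension_of_vanishesOn hF (U := V₀)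
    (((hVBB.swap_left hF).swap_right hF).mono hxleB hxleB le_sup_right) (by
      rw [finrank_sup_of_disjoint hCV₀] at hdim
      rw [finrank_span_singleton hx0]
      nlinarith)
  have hvV₀ : (k ∙ v) ≤ V₀ := (span_singleton_le_iff_mem _ _).2 hv
  refine ⟨_, hiso, ?_, ?_⟩
  · rw [sup_comm C]
    refine disjoint_sup_sup_of_disjoint_sup_sup ?_ (hCV₀.symm.mono_left hvV₀) ?_
    · exact (sup_comm D (k ∙ x) ▸ hxB'disj.disjoint_sup_right_of_disjoint_sup_left hDdisj).symm
    · exact hVW.symm.mono (sup_le hDxW (hB'.le.trans hB)) (sup_le (hvV₀.trans le_sup_right) hC)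
  · rw [finrank_sup_of_disjoint (hVW.symm.mono hDxW (hvV₀.trans le_sup_right)), hDxdim,
      finrank_span_singleton hv0, hDdim]

theorem MixedPartsBounded.eq_zero (hF : F.IsSymm) (hK : F.MixedPartsBounded u)
    (hu : (2 * u + 1) * (2 * u + 4) ≤ 2 * F.isotropicCodim + 2) : u = 0 := by
  by_contra hu0
  obtain ⟨W, hW, hWmax⟩ := F.exists_finrank_add_isotropicCodim
  obtain ⟨V, hWV⟩ := W.exists_isCompl
  obtain ⟨C, hC, B, hB, B', hB', hCdim, hB'dim, hBdim, hVBB, -, hiso⟩ :=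
    hK.exists_tight_split hF hWV.symm hW hWmax hu
  have hsum := finrank_add_eq_of_isCompl hWV
  have hB'lt : B' < B := lt_of_le_of_finrank_lt_finrank hB' (by lia)
  obtain ⟨P, hP, hPdisj, hPdim⟩ := exists_isTotallyIsotropic_disjoint_sup hF hWV.symm.disjoint hW
    hB hB'lt hC hVBB hB'dim (by nlinarith)
  have hle := hK.finrank_add_finrank_le hF hPdisj hP hiso
  rw [finrank_sup_of_disjoint (hWV.symm.disjoint.mono hC (hB'.trans hB))] at hle
  lia

theorem MixedPartsBounded.isotropicCodim_eq_one (hF : F.IsSymm) (hK : F.MixedPartsBounded u)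
    (hu : (2 * u + 1) * (2 * u + 4) ≤ 2 * F.isotropicCodim + 2) :
    F.isotropicCodim = 1 := by
  obtain rfl := hK.eq_zero hF hu
  obtain ⟨W, hW, hWmax⟩ := F.exists_finrank_add_isotropicCodim
  obtain ⟨V, hWV⟩ := W.exists_isCompl
  have hsum := finrank_add_eq_of_isCompl hWV
  by_contra hne
  obtain ⟨C, hC, hCdim, hCiso⟩ := hF.exists_isTotallyIsotropic_le 1 V (by lia)
  have hle := hK.finrank_add_finrank_le hF (hWV.symm.disjoint.mono_left hC) hCiso hW
  lia

theorem MixedPartsBounded.exists_vanishesOn_top (hF : F.IsSymm) (hK : F.MixedPartsBounded u)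
    (hu : (2 * u + 1) * (2 * u + 4) ≤ 2 * F.isotropicCodim + 2) :
    ∃ W : Submodule k E, finrank k W + 1 = finrank k E ∧ F.VanishesOn W ⊤ ⊤ := by
  have hcodim := hK.isotropicCodim_eq_one hF hu
  obtain rfl := hK.eq_zero hF hu
  obtain ⟨W, hW, hWmax⟩ := F.exists_finrank_add_isotropicCodim
  obtain ⟨V, hWV⟩ := W.exists_isCompl
  obtain ⟨-, -, B, hB, B', hB', -, hB'dim, -, hVBB, hBVV, -⟩ :=
    hK.exists_tight_split hF hWV.symm hW hWmax hu
  obtain rfl : B' = W := eq_of_le_of_finrank_eq (hB'.trans hB) (by lia)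
  obtain rfl : B = B' := le_antisymm hB hB'
  refine ⟨B, hcodim ▸ hWmax, ?_⟩
  rw [← hWV.symm.sup_eq_top]
  exact (VanishesOn.sup_sup hF ((hBVV.swap_left hF).swap_right hF) (hVBB.swap_right hF) hW
    |>.swap_right hF).swap_left hF

end TrilinForm

end MixedParts

section QRank

open Module Submodule

variable {k : Type*} [Field k] {n : ℕ} {f : MvPolynomial (Fin n) k}

theorem exists_eq_sum_of_polyQRank_le {m : ℕ} (hf : polyQRank f ≤ m) :
    ∃ m' ≤ m, ∃ ℓ q : Fin m' → MvPolynomial (Fin n) k,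
      (∀ i, (ℓ i).IsHomogeneous 1) ∧ (∀ i, (q i).IsHomogeneous 2) ∧ f = ∑ i, ℓ i * q i := by
  have hlt : polyQRank f < (m + 1 : ℕ) := hf.trans_lt (by exact_mod_cast m.lt_succ_self)
  obtain ⟨_, ⟨m', rfl, h⟩, hm'⟩ := sInf_lt_iff.1 hlt
  exact ⟨m', Nat.le_of_lt_succ (by exact_mod_cast hm'), h⟩

theorem polyQRank_eq_zero_iff : polyQRank f = 0 ↔ f = 0 := by
  refine ⟨fun hf => ?_, ?_⟩
  · obtain ⟨m, hm, ℓ, q, -, -, rfl⟩ := exists_eq_sum_of_polyQRank_le (m := 0) hf.le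
    obtain rfl := Nat.le_zero.1 hm
    simp
  · rintro rfl
    exact nonpos_iff_eq_zero.1 (sInf_le ⟨0, rfl, 0, 0, by simp, by simp, by simp⟩)

theorem exists_forall_eval_eq_zero_of_polyQRank_le {m : ℕ} (hf : polyQRank f ≤ m) :
    ∃ W : Submodule k (Fin n → k), n ≤ finrank k W + m ∧ ∀ x ∈ W, eval x f = 0 := by
  obtain ⟨m', hm', ℓ, q, hℓ, -, rfl⟩ := exists_eq_sum_of_polyQRank_le hf
  choose L hL using fun i => exists_dual_eval_eq (hℓ i)
  obtain ⟨W, -, hzero, hdim⟩ := exists_le_forall_dual_eq_zero L ⊤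
  rw [finrank_top, finrank_fin_fun, Nat.card_fin] at hdim
  exact ⟨W, hdim.trans (by lia), fun x hx => by simp [hL, hzero x hx]⟩

variable {F : TrilinForm k (Fin n → k)}

-- With `x = v + w` along a complement `V` of `W`, every term of
-- `F x x x = F v x x + F w v x + F w w v + F w w w` but the last is linear in `v`.
theorem polyQRank_le_of_isTotallyIsotropic [Infinite k] (hF : F.IsSymm)
    (hf : ∀ x, eval x f = F x x x) {W : Submodule k (Fin n → k)} (hW : F.IsTotallyIsotropic W)
    {c : ℕ} (hc : finrank k W + c = n) : polyQRank f ≤ c := by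
  obtain ⟨V, hWV⟩ := W.exists_isCompl
  have hdim := finrank_add_eq_of_isCompl hWV
  rw [finrank_fin_fun] at hdim
  let b := finBasisOfFinrankEq k V (show finrank k V = c by lia)
  let π := V.projectionOnto W hWV.symm
  let w : (Fin n → k) →ₗ[k] (Fin n → k) := LinearMap.id - V.subtype ∘ₗ π
  have hw : ∀ x, w x ∈ W := fun x => by
    simpa [w, π] using sub_projection_mem hWV.symm x
  choose ℓ hℓ hℓe using fun i => exists_isHomogeneous_one_eval_eq (b.coord i ∘ₗ π)
  choose q hq hqe using fun i => exists_isHomogeneous_two_eval_eq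
    (F (b i) + (F (b i)).compl₁₂ w LinearMap.id + (F (b i)).compl₁₂ w w)
  refine sInf_le ⟨c, rfl, ℓ, q, hℓ, hq, MvPolynomial.funext fun x => ?_⟩
  have hexpand : F x x x =
      F (π x : Fin n → k) x x + F (π x : Fin n → k) (w x) x + F (π x : Fin n → k) (w x) (w x) := by
    have hsplit : ∀ y z, F x y z = F (π x : Fin n → k) y z + F (w x) y z := fun y z => by
      simp [w]
    linear_combination hsplit x x + hF.swap_left (w x) x x + hsplit (w x) x +
      hF.swap_right (w x) (w x) x + hF.swap_left (w x) x (w x) + hsplit (w x) (w x) +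
      hW _ (hw x) _ (hw x) _ (hw x)
  have hπ : (π x : Fin n → k) = ∑ i, b.coord i (π x) • (b i : Fin n → k) := by
    simpa only [coe_sum, Submodule.coe_smul, Basis.coord_apply] using
      congrArg Subtype.val (b.sum_repr (π x)).symm
  rw [hf, hexpand, hπ]
  simp [hℓe, hqe, LinearMap.sum_apply, mul_add, Finset.sum_add_distrib]

theorem polyQRank_eq_isotropicCodim [Infinite k] (h2 : (2 : k) ≠ 0) (h3 : (3 : k) ≠ 0)
    (hF : F.IsSymm) (hf : ∀ x, eval x f = F x x x) : polyQRank f = F.isotropicCodim := by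
  obtain ⟨W, hW, hWmax⟩ := F.exists_finrank_add_isotropicCodim
  rw [finrank_fin_fun] at hWmax
  have hle := polyQRank_le_of_isTotallyIsotropic hF hf hW hWmax
  refine le_antisymm hle ?_
  obtain ⟨m, hm⟩ := ENat.ne_top_iff_exists.1 (hle.trans_lt (ENat.natCast_lt_top _)).ne
  obtain ⟨U, hdim, hU⟩ := exists_forall_eval_eq_zero_of_polyQRank_le hm.ge
  have hUiso : F.IsTotallyIsotropic U := .of_diagonal hF h2 h3 fun x hx => hf x ▸ hU x hx
  have hcodim := hUiso.finrank_add_isotropicCodim_le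
  rw [finrank_fin_fun] at hcodim
  rw [← hm, Nat.cast_le]
  lia

end QRank

section Degenerations

open Module Submodule

variable {k : Type*} [Field k] {n : ℕ}

theorem inZariskiClosure_of_mem {S : Set (MvPolynomial (Fin n) k)} {f : MvPolynomial (Fin n) k}
    (hf : f ∈ S) : InZariskiClosure S f :=
  fun _ hP => hP f hf

theorem inZariskiClosure_of_forall_ne_zero [Infinite k] {ι : Type*} [Fintype ι]
    {S : Set (MvPolynomial (Fin n) k)} (N : ι → ℕ) (p : ι → MvPolynomial (Fin n) k)
    (h : ∀ t : k, t ≠ 0 → ∑ a, t ^ N a • p a ∈ S) :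
    InZariskiClosure S (∑ a, (0 : k) ^ N a • p a) := by
  intro P hP
  let Q : Polynomial k := aeval
    (fun m => ∑ a, Polynomial.C (coeff m (p a)) * Polynomial.X ^ N a) P
  have hQ : ∀ t, Q.eval t = eval (fun m => coeff m (∑ a, t ^ N a • p a)) P := fun t => by
    rw [← Polynomial.coe_aeval_eq_eval, comp_aeval_apply, aeval_eq_eval]
    simp [Polynomial.coe_aeval_eq_eval, coeff_sum, mul_comm (t ^ _)]
  have hXQ : Polynomial.X * Q = 0 := Polynomial.funext fun t => by
    rcases eq_or_ne t 0 with rfl | ht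
    · simp
    · simp [hQ, hP _ (h t ht)]
  have hQzero : Q = 0 := (mul_eq_zero.1 hXQ).resolve_left Polynomial.X_ne_zero
  rw [← hQ, hQzero, Polynomial.eval_zero]

theorem eval_glAct (g : GL (Fin n) k) (f : MvPolynomial (Fin n) k) (x : Fin n → k) :
    eval x (glAct g f) = eval (Matrix.vecMul x g) f := by
  rw [glAct, ← aeval_eq_eval, comp_aeval_apply, aeval_eq_eval]
  simp [funext fun j => Matrix.vecMul_apply_eq_sum x g.1 j, mul_comm]

theorem mem_glOrbit_of_linearEquiv [Infinite k] {f h : MvPolynomial (Fin n) k}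
    (φ : (Fin n → k) ≃ₗ[k] (Fin n → k)) (hφ : ∀ x, eval x h = eval (φ x) f) : h ∈ glOrbit f := by
  let M : GL (Fin n) k := ⟨φ.toLinearMap.toMatrixRight', φ.symm.toLinearMap.toMatrixRight',
    by simp [← LinearMap.toMatrixRight'_comp], by simp [← LinearMap.toMatrixRight'_comp]⟩
  refine ⟨M, MvPolynomial.funext fun x => ?_⟩
  rw [hφ, eval_glAct, ← Matrix.toLinearMapRight'_apply]
  simp [M]

variable {E : Type*} [AddCommGroup E] [Module k E]

theorem TrilinForm.apply_sum_smul (F : TrilinForm k E) {ι ι' ι'' : Type*} (s : Finset ι)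
    (s' : Finset ι') (s'' : Finset ι'') (c : ι → k) (c' : ι' → k) (c'' : ι'' → k) (u : ι → E)
    (u' : ι' → E) (u'' : ι'' → E) :
    F (∑ i ∈ s, c i • u i) (∑ j ∈ s', c' j • u' j) (∑ l ∈ s'', c'' l • u'' l) =
      ∑ i ∈ s, ∑ j ∈ s', ∑ l ∈ s'', c i * c' j * c'' l * F (u i) (u' j) (u'' l) := by
  simp_rw [map_sum F, LinearMap.sum_apply, map_sum (F _), LinearMap.sum_apply, map_sum]
  refine Finset.sum_congr rfl fun i _ => Finset.sum_congr rfl fun j _ =>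
    Finset.sum_congr rfl fun l _ => ?_
  simp only [map_smul, LinearMap.smul_apply, smul_eq_mul]
  ring

theorem exists_linearEquiv_apply_eq_sum_smul {ι : Type*} [Fintype ι] {e : ι → Module.End k E}
    (he : CompleteOrthogonalIdempotents e) {c : ι → k} (hc : ∀ i, c i ≠ 0) :
    ∃ Λ : E ≃ₗ[k] E, ∀ x, Λ x = ∑ i, c i • e i x := by
  classical
  have hmul : ∀ c d : ι → k, (∀ i, d i * c i = 1) →
      (∑ i, c i • e i) ∘ₗ (∑ i, d i • e i) = LinearMap.id := fun c d hcd => by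
    rw [← Module.End.mul_eq_comp, Finset.sum_mul_sum]
    simp [he.mul_eq, smul_smul, hcd, he.complete, Module.End.one_eq_id]
  exact ⟨.ofLinearMap (∑ i, c i • e i) (∑ i, (c i)⁻¹ • e i)
    (hmul _ _ fun i => inv_mul_cancel₀ (hc i)) (hmul _ _ fun i => mul_inv_cancel₀ (hc i)),
    fun x => by simp [LinearMap.sum_apply]⟩

-- The limit at `t = 0` of the one-parameter subgroup acting by `t ^ w i` on the range of `e i`.
theorem inZariskiClosure_glOrbit_of_weights [Infinite k] {ι : Type*} [Fintype ι]
    {f g : MvPolynomial (Fin n) k} {F : TrilinForm k (Fin n → k)}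
    (hf : ∀ x, eval x f = F x x x) {e : ι → Module.End k (Fin n → k)}
    (he : CompleteOrthogonalIdempotents e) (w : ι → ℤ)
    (hneg : ∀ i j l, w i + w j + w l < 0 → ∀ y, F (e i y) (e j y) (e l y) = 0)
    (φ : (Fin n → k) ≃ₗ[k] (Fin n → k))
    (hg : ∀ x, eval x g = ∑ i, ∑ j, ∑ l, if w i + w j + w l = 0 then
      F (e i (φ x)) (e j (φ x)) (e l (φ x)) else 0) :
    InZariskiClosure (glOrbit f) g := by
  choose p _ hp using fun i j l => exists_isHomogeneous_three_eval_eq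
    ((F.compl₁₂ (e i ∘ₗ φ.toLinearMap) (e j ∘ₗ φ.toLinearMap)).compr₂
      (LinearMap.lcomp k k (e l ∘ₗ φ.toLinearMap)))
  let N : ι × ι × ι → ℕ := fun a => (w a.1 + w a.2.1 + w a.2.2).toNat
  have hlimit : g = ∑ a, (0 : k) ^ N a • p a.1 a.2.1 a.2.2 := MvPolynomial.funext fun x => by
    simp only [hg, map_sum, Fintype.sum_prod_type, N, smul_eval, hp]
    refine Fintype.sum_congr _ _ fun i => Fintype.sum_congr _ _ fun j =>
      Fintype.sum_congr _ _ fun l => ?_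
    rcases lt_trichotomy (w i + w j + w l) 0 with hlt | heq | hgt
    · simp [hneg _ _ _ hlt]
    · simp [heq]
    · simp [hgt.ne', hgt]
  rw [hlimit]
  refine inZariskiClosure_of_forall_ne_zero N _ fun t ht => ?_
  obtain ⟨Λ, hΛ⟩ := exists_linearEquiv_apply_eq_sum_smul he fun i => zpow_ne_zero (w i) ht
  refine mem_glOrbit_of_linearEquiv (φ.trans Λ) fun x => ?_
  rw [hf, LinearEquiv.trans_apply, hΛ, F.apply_sum_smul]
  simp only [map_sum, Fintype.sum_prod_type, N, smul_eval, hp]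
  refine Fintype.sum_congr _ _ fun i => Fintype.sum_congr _ _ fun j =>
    Fintype.sum_congr _ _ fun l => ?_
  rcases lt_or_ge (w i + w j + w l) 0 with hlt | hle
  · simp [hneg _ _ _ hlt]
  · rw [← zpow_natCast, Int.toNat_of_nonneg hle, zpow_add₀ ht, zpow_add₀ ht]
    simp

/-- Separable cubics: those of the form `∑ ℓᵢ qᵢ` with the `ℓᵢ` linear in the variables of some
set `S` and the `qᵢ` quadratic in the remaining variables. -/
def IsSeparableCubic (g : MvPolynomial (Fin n) k) : Prop :=
  ∃ (S : Set (Fin n)) (m : ℕ) (ℓ q : Fin m → MvPolynomial (Fin n) k),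
    (∀ i, (ℓ i).IsHomogeneous 1 ∧ ((ℓ i).vars : Set (Fin n)) ⊆ S) ∧
    (∀ i, (q i).IsHomogeneous 2 ∧ ((q i).vars : Set (Fin n)) ⊆ Sᶜ) ∧
    g = ∑ i, ℓ i * q i

theorem isSeparableCubic_zero : IsSeparableCubic (0 : MvPolynomial (Fin n) k) :=
  ⟨∅, 0, Fin.elim0, Fin.elim0, fun i => i.elim0, fun i => i.elim0, by simp⟩

theorem isSeparableCubic_sum (S : Finset (Fin n)) (c : Fin n → Fin n → Fin n → k) :
    IsSeparableCubic (∑ i ∈ S, X i * ∑ j ∈ Sᶜ, ∑ l ∈ Sᶜ, C (c i j l) * X j * X l) := by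
  refine ⟨S, n, fun i => if i ∈ S then X i else 0,
    fun i => ∑ j ∈ Sᶜ, ∑ l ∈ Sᶜ, C (c i j l) * X j * X l, fun i => ?_, fun i => ⟨?_, ?_⟩, ?_⟩
  · by_cases hi : i ∈ S
    · simpa [hi] using isHomogeneous_X k i
    · simpa [hi] using isHomogeneous_zero _ _ _
  · exact .sum _ _ _ fun j _ => .sum _ _ _ fun l _ =>
      ((isHomogeneous_C _ _).mul (isHomogeneous_X k j)).mul (isHomogeneous_X k l)
  · have hX : ∀ j ∈ Sᶜ, (X j : MvPolynomial (Fin n) k) ∈ supported k (S : Set (Fin n))ᶜ :=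
      fun j hj => X_mem_supported.2 (by simpa using hj)
    exact mem_supported.1 <| sum_mem fun j hj => sum_mem fun l hl =>
      mul_mem (mul_mem (Subalgebra.algebraMap_mem _ _) (hX j hj)) (hX l hl)
  · simp [ite_mul]

theorem exists_basis_apply_eq_ite_of_isProj [FiniteDimensional k E]
    (hn : finrank k E = n) {P : Submodule k E} {a : Module.End k E} (ha : LinearMap.IsProj P a) :
    ∃ (b : Basis (Fin n) k E) (S : Finset (Fin n)),
      ∀ i, a (b i) = if i ∈ S then b i else 0 := by
  let b' := ((finBasis k P).prod (finBasis k (LinearMap.ker a))).map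
    (prodEquivOfIsCompl _ _ ha.isCompl)
  let σ := Fintype.equivFinOfCardEq ((finrank_eq_card_basis b').symm.trans hn)
  refine ⟨b'.reindex σ, Finset.univ.filter fun i => (σ.symm i).isLeft, fun i => ?_⟩
  rcases hi : σ.symm i with j | j <;> simp [hi, b', ha.map_id]

theorem exists_isSeparableCubic_eval_eq {P : Submodule k (Fin n → k)}
    {a : Module.End k (Fin n → k)} (ha : LinearMap.IsProj P a) :
    ∃ φ : (Fin n → k) ≃ₗ[k] (Fin n → k), ∀ G : TrilinForm k (Fin n → k),
      ∃ g, IsSeparableCubic g ∧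
        ∀ x, eval x g = G (a (φ x)) (φ x - a (φ x)) (φ x - a (φ x)) := by
  obtain ⟨b, S, hb⟩ := exists_basis_apply_eq_ite_of_isProj (finrank_fin_fun k) ha
  have hleft : ∀ x, a (b.equivFun.symm x) = ∑ i ∈ S, x i • b i := fun x => by
    simp [Basis.equivFun_symm_apply, hb]
  have hright : ∀ x, b.equivFun.symm x - a (b.equivFun.symm x) = ∑ i ∈ Sᶜ, x i • b i :=
    fun x => by
      rw [hleft, Basis.equivFun_symm_apply, sub_eq_iff_eq_add', Finset.sum_add_sum_compl]
  refine ⟨b.equivFun.symm, fun G => ⟨_, isSeparableCubic_sum S fun i j l => G (b i) (b j) (b l),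
    fun x => ?_⟩⟩
  rw [hright, hleft, G.apply_sum_smul]
  simp only [map_sum, map_mul, Finset.mul_sum, eval_X, eval_C]
  exact Finset.sum_congr rfl fun i _ => Finset.sum_congr rfl fun j _ =>
    Finset.sum_congr rfl fun l _ => by ring

theorem exists_completeOrthogonalIdempotents_isProj {P Q : Submodule k E} (hPQ : Disjoint P Q) :
    ∃ e : Fin 3 → Module.End k E,
      CompleteOrthogonalIdempotents e ∧ LinearMap.IsProj P (e 0) ∧ LinearMap.IsProj Q (e 1) := by
  obtain ⟨R, hR⟩ := (P ⊔ Q).exists_isCompl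
  have hP : IsCompl P (Q ⊔ R) := hPQ.isCompl_sup_right_of_isCompl_sup_left hR
  have hQ : IsCompl Q (P ⊔ R) :=
    hPQ.symm.isCompl_sup_right_of_isCompl_sup_left (sup_comm P Q ▸ hR)
  let a : Module.End k E := P.projection (Q ⊔ R) hP
  let b : Module.End k E := Q.projection (P ⊔ R) hQ
  have haa : a * a = a := isIdempotentElem_projection hP
  have hbb : b * b = b := isIdempotentElem_projection hQ
  have hab : a * b = 0 := LinearMap.ext fun x =>
    (projection_apply_eq_zero_iff hP).2 (mem_sup_left (projection_apply_mem hQ x))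
  have hba : b * a = 0 := LinearMap.ext fun x =>
    (projection_apply_eq_zero_iff hQ).2 (mem_sup_left (projection_apply_mem hP x))
  refine ⟨![a, b, 1 - a - b], CompleteOrthogonalIdempotents.iff_ortho_complete.2 ⟨?_, ?_⟩,
    ⟨fun x => projection_apply_mem hP x, fun x hx => projection_apply_of_mem_left hP hx⟩,
    ⟨fun x => projection_apply_mem hQ x, fun x hx => projection_apply_of_mem_left hQ hx⟩⟩
  · intro i j hij
    fin_cases i <;> fin_cases j <;> simp_all [mul_sub, sub_mul]
  · simp [Fin.sum_univ_three]

variable [Infinite k] {f : MvPolynomial (Fin n) k} {F : TrilinForm k (Fin n → k)}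
  {e : Fin 3 → Module.End k (Fin n → k)} {P Q : Submodule k (Fin n → k)}

theorem exists_isSeparableCubic_of_weights (hF : F.IsSymm) (hf : ∀ x, eval x f = F x x x)
    (he : CompleteOrthogonalIdempotents e) (hP : LinearMap.IsProj P (e 0)) (w : Fin 3 → ℤ)
    (hneg : ∀ i j l, w i + w j + w l < 0 → ∀ y, F (e i y) (e j y) (e l y) = 0)
    (hzero : ∀ i j l, w i + w j + w l = 0 ↔
      (i, j, l) = (0, 1, 1) ∨ (i, j, l) = (1, 0, 1) ∨ (i, j, l) = (1, 1, 0)) :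
    ∃ (φ : (Fin n → k) ≃ₗ[k] (Fin n → k)) (g : MvPolynomial (Fin n) k),
      InZariskiClosure (glOrbit f) g ∧ IsSeparableCubic g ∧
      ∀ x, eval x g = 3 * F (e 0 (φ x)) (e 1 (φ x)) (e 1 (φ x)) := by
  obtain ⟨φ, hφ⟩ := exists_isSeparableCubic_eval_eq hP
  obtain ⟨g, hg, hge⟩ := hφ
    ((3 : k) • (F.compl₁₂ LinearMap.id (e 1)).compr₂ (LinearMap.lcomp k k (e 1)))
  have hker : ∀ y, e 1 (y - e 0 y) = e 1 y := fun y => by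
    rw [map_sub, ← Module.End.mul_apply, he.ortho (by decide)]
    simp
  have hgF : ∀ x, eval x g = 3 * F (e 0 (φ x)) (e 1 (φ x)) (e 1 (φ x)) := fun x => by
    simp [hge, hker]
  refine ⟨φ, g, inZariskiClosure_glOrbit_of_weights hf he w hneg φ fun x => ?_, hg, hgF⟩
  have hsymm : 3 * F (e 0 (φ x)) (e 1 (φ x)) (e 1 (φ x)) = F (e 0 (φ x)) (e 1 (φ x)) (e 1 (φ x)) +
      (F (e 1 (φ x)) (e 0 (φ x)) (e 1 (φ x)) + F (e 1 (φ x)) (e 1 (φ x)) (e 0 (φ x))) := by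
    linear_combination -2 * hF.swap_left (e 1 (φ x)) (e 0 (φ x)) (e 1 (φ x)) -
      hF.swap_right (e 1 (φ x)) (e 1 (φ x)) (e 0 (φ x))
  simpa [hgF, hzero, Fin.sum_univ_three] using hsymm

theorem exists_isSeparableCubic_eval_eq_mixed (hF : F.IsSymm) (hf : ∀ x, eval x f = F x x x)
    (he : CompleteOrthogonalIdempotents e) (hP : LinearMap.IsProj P (e 0))
    (hQ : LinearMap.IsProj Q (e 1))
    (hPQ : F.IsTotallyIsotropic Q ∨ F.IsTotallyIsotropic P ∧ F.VanishesOn P P Q) :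
    ∃ (φ : (Fin n → k) ≃ₗ[k] (Fin n → k)) (g : MvPolynomial (Fin n) k),
      InZariskiClosure (glOrbit f) g ∧ IsSeparableCubic g ∧
      ∀ x, eval x g = 3 * F (e 0 (φ x)) (e 1 (φ x)) (e 1 (φ x)) := by
  rcases hPQ with hQQQ | ⟨hPPP, hPPQ⟩
  · refine exists_isSeparableCubic_of_weights hF hf he hP ![2, -1, 5] ?_ (by decide)
    intro i j l hneg y
    obtain ⟨rfl, rfl, rfl⟩ : i = 1 ∧ j = 1 ∧ l = 1 := by revert i j l; decide
    exact hQQQ _ (hQ.map_mem y) _ (hQ.map_mem y) _ (hQ.map_mem y)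
  · refine exists_isSeparableCubic_of_weights hF hf he hP ![-2, 1, 5] ?_ (by decide)
    intro i j l hneg y
    have hcases : (i, j, l) = (0, 0, 0) ∨ (i, j, l) = (0, 0, 1) ∨ (i, j, l) = (0, 1, 0) ∨
        (i, j, l) = (1, 0, 0) := by revert i j l; decide
    simp only [Prod.mk.injEq] at hcases
    rcases hcases with ⟨rfl, rfl, rfl⟩ | ⟨rfl, rfl, rfl⟩ | ⟨rfl, rfl, rfl⟩ | ⟨rfl, rfl, rfl⟩
    · exact hPPP _ (hP.map_mem y) _ (hP.map_mem y) _ (hP.map_mem y)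
    · exact hPPQ _ (hP.map_mem y) _ (hP.map_mem y) _ (hQ.map_mem y)
    · exact hPPQ.swap_right hF _ (hP.map_mem y) _ (hQ.map_mem y) _ (hP.map_mem y)
    · exact (hPPQ.swap_right hF).swap_left hF _ (hQ.map_mem y) _ (hP.map_mem y) _ (hP.map_mem y)

end Degenerations

section SmallDegenerations

open Module Submodule

variable {k : Type*} [Field k]

namespace TrilinForm

variable {E : Type*} [AddCommGroup E] [Module k E] {F : TrilinForm k E} {Q U : Submodule k E}
  {π ρ : Module.End k E}

-- Comparing the values at `x` and `x ± b` isolates the part of `F (π x) (ρ x) (ρ x)` that is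
-- quadratic in `b ∈ U ⊓ Q`.
theorem vanishesOn_map_inf_inf (hF : F.IsSymm) (h2 : (2 : k) ≠ 0) (hπ : ∀ x ∈ Q, π x = 0)
    (hρ : LinearMap.IsProj Q ρ) (hU : ∀ x ∈ U, F (π x) (ρ x) (ρ x) = 0) :
    F.VanishesOn (U.map π) (U ⊓ Q) (U ⊓ Q) := by
  rintro _ ⟨x, hx, rfl⟩
  have hdiag : ∀ b ∈ U ⊓ Q, F (π x) b b = 0 := fun b hb => by
    have hadd := hU _ (U.add_mem hx hb.1)
    have hsub := hU _ (U.sub_mem hx hb.1)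
    simp only [map_add, map_sub, hπ b hb.2, hρ.map_id b hb.2, add_zero, sub_zero,
      LinearMap.add_apply, LinearMap.sub_apply] at hadd hsub
    refine (mul_eq_zero.1 ?_).resolve_left h2
    linear_combination hadd + hsub - 2 * hU x hx
  intro b hb c hc
  have hadd := hdiag _ (add_mem hb hc)
  simp only [map_add, LinearMap.add_apply] at hadd
  refine (mul_eq_zero.1 ?_).resolve_left h2
  linear_combination hadd - hdiag b hb - hdiag c hc + hF.swap_right (π x) b c

end TrilinForm

theorem finrank_map_add_finrank_inf_of_isProj {E : Type*} [AddCommGroup E] [Module k E]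
    [FiniteDimensional k E] {P Q U : Submodule k E} {π : Module.End k E}
    (hπP : LinearMap.IsProj P π) (hπQ : ∀ x ∈ Q, π x = 0) (hU : U ≤ P ⊔ Q) :
    finrank k (U.map π) + finrank k (U ⊓ Q : Submodule k E) = finrank k U := by
  have hker : U ⊓ LinearMap.ker π = U ⊓ Q := by
    refine le_antisymm (fun x hx => ⟨hx.1, ?_⟩) (inf_le_inf_left U fun x hx => hπQ x hx)
    obtain ⟨a, ha, b, hb, rfl⟩ := mem_sup.1 (hU hx.1)
    have hab : π (a + b) = 0 := hx.2
    rw [map_add, hπP.map_id a ha, hπQ b hb, add_zero] at hab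
    simpa [hab] using hb
  rw [← (π.domRestrict U).finrank_range_add_finrank_ker, LinearMap.range_domRestrict,
    LinearMap.ker_domRestrict, ← hker, ← map_comap_subtype, finrank_map_subtype_eq]

variable {n : ℕ} {f : MvPolynomial (Fin n) k} {F : TrilinForm k (Fin n → k)}

theorem mixedPartsBounded_of_polyQRank_le [Infinite k] (h2 : (2 : k) ≠ 0) (h3 : (3 : k) ≠ 0)
    (hF : F.IsSymm) (hf : ∀ x, eval x f = F x x x) {u : ℕ}
    (hu : ∀ g, InZariskiClosure (glOrbit f) g → IsSeparableCubic g → polyQRank g ≤ u) :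
    F.MixedPartsBounded u := by
  intro P Q hPQ hvanish
  obtain ⟨e, he, hP, hQ⟩ := exists_completeOrthogonalIdempotents_isProj hPQ
  obtain ⟨φ, g, hg, hsep, hge⟩ := exists_isSeparableCubic_eval_eq_mixed hF hf he hP hQ hvanish
  obtain ⟨K, hKdim, hK⟩ := exists_forall_eval_eq_zero_of_polyQRank_le (hu g hg hsep)
  let U := K.map φ.toLinearMap ⊓ (P ⊔ Q)
  have hUzero : ∀ y ∈ U, F (e 0 y) (e 1 y) (e 1 y) = 0 := by
    rintro _ ⟨⟨x, hx, rfl⟩, -⟩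
    exact (mul_eq_zero.1 ((hge x).symm.trans (hK x hx))).resolve_left h3
  have hQker : ∀ y ∈ Q, e 0 y = 0 := fun y hy => by
    rw [← hQ.map_id y hy, ← Module.End.mul_apply, he.ortho (by decide), LinearMap.zero_apply]
  refine ⟨U.map (e 0), map_le_iff_le_comap.2 fun y _ => hP.map_mem y, U ⊓ Q, inf_le_right,
    TrilinForm.vanishesOn_map_inf_inf hF h2 hQker hQ hUzero, ?_⟩
  have hUdim := finrank_map_add_finrank_inf_of_isProj hP hQker (U := U) inf_le_right
  have hsupinf := finrank_sup_add_finrank_inf_eq (K.map φ.toLinearMap) (P ⊔ Q)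
  have hsup := (K.map φ.toLinearMap ⊔ (P ⊔ Q)).finrank_le
  rw [finrank_fin_fun] at hsup
  rw [finrank_sup_of_disjoint hPQ, LinearEquiv.finrank_map_eq] at hsupinf
  change _ + finrank k U = _ at hsupinf
  omega

end SmallDegenerations

section Conclusion

open Module

theorem exists_eq_pow_three_of_vanishesOn {k : Type*} [Field k] [IsAlgClosed k] {n : ℕ}
    {f : MvPolynomial (Fin n) k} {F : TrilinForm k (Fin n → k)} (hF : F.IsSymm)
    (hf : ∀ x, eval x f = F x x x) {W : Submodule k (Fin n → k)} (hdim : finrank k W + 1 = n)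
    (hW : F.VanishesOn W ⊤ ⊤) : ∃ l : MvPolynomial (Fin n) k, l.IsHomogeneous 1 ∧ f = l ^ 3 := by
  obtain ⟨V, hWV⟩ := W.exists_isCompl
  have hV : finrank k V = 1 := by
    have hadd := Submodule.finrank_add_eq_of_isCompl hWV
    rw [finrank_fin_fun] at hadd
    lia
  let b := finBasisOfFinrankEq k V hV
  let v : Fin n → k := b 0
  let L : Dual k (Fin n → k) := b.coord 0 ∘ₗ V.projectionOnto W hWV.symm
  have hmem : ∀ x, x - L x • v ∈ W := fun x => by
    have hproj := congrArg Subtype.val (b.sum_repr (V.projectionOnto W hWV.symm x))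
    rw [Fin.sum_univ_one, Submodule.coe_smul] at hproj
    have hsub := Submodule.sub_projection_mem hWV.symm x
    rwa [Submodule.projection_apply, ← hproj] at hsub
  have hslot : ∀ x y z, F x y z = L x * F v y z := fun x y z => by
    simpa [sub_eq_zero] using hW _ (hmem x) y trivial z trivial
  obtain ⟨γ, hγ⟩ := IsAlgClosed.exists_pow_nat_eq (F v v v) three_pos
  obtain ⟨l, hl, hle⟩ := exists_isHomogeneous_one_eval_eq (γ • L)
  refine ⟨l, hl, MvPolynomial.funext fun x => ?_⟩
  calc eval x f = L x * F v x x := by rw [hf, hslot]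
    _ = L x * (L x * (L x * F v v v)) := by
      rw [hF.swap_left, hslot, hF.swap_right, hF.swap_left, hslot]
    _ = eval x (l ^ 3) := by
      rw [← hγ, map_pow, hle, LinearMap.smul_apply, smul_eq_mul]
      ring

theorem exists_eq_pow_three_of_polyQRank_le {k : Type*} [Field k] [IsAlgClosed k]
    (h2 : (2 : k) ≠ 0) (h3 : (3 : k) ≠ 0) {n : ℕ} {f : MvPolynomial (Fin n) k}
    (hf : f.IsHomogeneous 3) {r u : ℕ} (hr : polyQRank f = r)
    (hur : (2 * u + 1) * (2 * u + 4) ≤ 2 * r + 2)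
    (hu : ∀ g, InZariskiClosure (glOrbit f) g → IsSeparableCubic g → polyQRank g ≤ u) :
    ∃ l : MvPolynomial (Fin n) k, l.IsHomogeneous 1 ∧ f = l ^ 3 := by
  have : Infinite k := IsAlgClosed.instInfinite
  obtain ⟨F, hF, hfF⟩ := exists_isSymm_eval_eq h2 h3 hf
  have hcodim : F.isotropicCodim = r := by
    exact_mod_cast (polyQRank_eq_isotropicCodim h2 h3 hF hfF).symm.trans hr
  have hbounded := mixedPartsBounded_of_polyQRank_le h2 h3 hF hfF hu
  obtain ⟨W, hWdim, hW⟩ := hbounded.exists_vanishesOn_top hF (hcodim ▸ hur)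
  rw [finrank_fin_fun] at hWdim
  exact exists_eq_pow_three_of_vanishesOn hF hfF hWdim hW

theorem xi_eq_zero_iff {r : ℕ} : xi r = 0 ↔ r = 0 := by
  rw [xi, Nat.floor_eq_zero, div_lt_one two_pos, sub_lt_iff_lt_add, Real.sqrt_lt' (by norm_num),
    ← Nat.lt_one_iff, ← Nat.cast_lt (α := ℝ), Nat.cast_one]
  constructor <;> intro h <;> linarith

theorem mul_add_three_le_of_le_xi {t r : ℕ} (ht : t ≠ 0) (h : t ≤ xi r) :
    t * (t + 3) ≤ 2 * r + 2 := by
  have hfloor := (Nat.le_floor_iff' ht).1 h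
  have hsqrt : (2 * t + 3 : ℝ) ≤ √(8 * r + 17) := by linarith
  have hsq := (Real.le_sqrt' (by positivity)).1 hsqrt
  have hreal : (t * (t + 3) : ℝ) ≤ 2 * r + 2 := by nlinarith
  exact_mod_cast hreal

theorem mem_glOrbit_self {k : Type*} [Field k] {n : ℕ} (f : MvPolynomial (Fin n) k) :
    f ∈ glOrbit f :=
  ⟨1, by simp [glAct, Matrix.one_apply]⟩

theorem le_of_two_mul_lt_two_mul_add_one {a : ℕ∞} {u : ℕ} (h : 2 * a < (2 * (u + 1) : ℕ)) :
    a ≤ u := by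
  induction a with
  | top => simp at h
  | coe a => norm_cast at h ⊢; lia

end Conclusion

/-- Separable degeneration: if `f ∈ P₃(kⁿ)` has q-rank `r` and is not the cube of a nonzero
linear form, then the Zariski closure of its `GLₙ(k)`-orbit contains a separable cubic
`g = ∑ ℓᵢ qᵢ` (the `ℓᵢ` linear in the variables of `S`, the `qᵢ` quadratic in the
complementary variables) with `2 · qrank(g) ≥ ξ(r)`. Nonzero cubes of linear forms have
q-rank 1, so this covers every `f` with `r ≠ 1`; for them the conclusion fails. -/
theorem separable_degeneration {k : Type*} [Field k] [IsAlgClosed k]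
    (h2 : (2 : k) ≠ 0) (h3 : (3 : k) ≠ 0) {n : ℕ}
    (f : MvPolynomial (Fin n) k) (hf : f.IsHomogeneous 3)
    (hcube : ∀ l : MvPolynomial (Fin n) k, l.IsHomogeneous 1 → l ≠ 0 → f ≠ l ^ 3)
    (r : ℕ) (hr : polyQRank f = (r : ℕ∞)) :
    ∃ g : MvPolynomial (Fin n) k, InZariskiClosure (glOrbit f) g ∧
      ∃ (S : Set (Fin n)) (m : ℕ) (ℓ q : Fin m → MvPolynomial (Fin n) k),
        (∀ i, (ℓ i).IsHomogeneous 1 ∧ ((ℓ i).vars : Set (Fin n)) ⊆ S) ∧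
        (∀ i, (q i).IsHomogeneous 2 ∧ ((q i).vars : Set (Fin n)) ⊆ Sᶜ) ∧
        g = ∑ i, ℓ i * q i ∧
        (xi r : ℕ∞) ≤ 2 * polyQRank g := by
  suffices ∃ g, InZariskiClosure (glOrbit f) g ∧ IsSeparableCubic g ∧ xi r ≤ 2 * polyQRank g by
    obtain ⟨g, hg, ⟨S, m, ℓ, q, hℓ, hq, hsum⟩, hxi⟩ := this
    exact ⟨g, hg, S, m, ℓ, q, hℓ, hq, hsum, hxi⟩
  by_contra! hsmall
  have hr0 : r = 0 ↔ f = 0 := by rw [← polyQRank_eq_zero_iff, hr, Nat.cast_eq_zero]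
  have hf0 : f ≠ 0 := by
    rintro rfl
    have hlt := hsmall 0 (inZariskiClosure_of_mem (mem_glOrbit_self 0)) isSeparableCubic_zero
    simp [xi_eq_zero_iff.2 (hr0.2 rfl)] at hlt
  have hxi : xi r ≠ 0 := mt (hr0.1 ∘ xi_eq_zero_iff.1) hf0
  obtain ⟨u, hu, hu'⟩ : ∃ u, 2 * u + 1 ≤ xi r ∧ xi r ≤ 2 * (u + 1) :=
    ⟨(xi r - 1) / 2, by lia, by lia⟩
  obtain ⟨l, hl, rfl⟩ := exists_eq_pow_three_of_polyQRank_le h2 h3 hf hr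
    (mul_add_three_le_of_le_xi (by lia) hu) fun g hg hsep =>
      le_of_two_mul_lt_two_mul_add_one ((hsmall g hg hsep).trans_le (by exact_mod_cast hu'))
  exact hcube l hl (by rintro rfl; simp at hf0) rfl
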